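/- For every real number x > 0, the double inequality 1/(2x) − 1/(12x^2) < ψ(x+1) − ln x < 1/(2x) holds. -/

import Mathlib

/-!
Write `g x = ψ(x + 1) - log x`. Convexity of `log ∘ Γ` and `Γ(x + 1) = x Γ(x)` give
`ψ(x) ≤ log x ≤ ψ(x + 1) = ψ(x) + 1 / x`, hence `0 ≤ g x ≤ 1 / x`, so `g` vanishes at infinity.
Both differences `1 / (2x) - g x` and `g x - 1 / (2x) + 1 / (12x²)` therefore tend to `0` along
`x, x + 1, x + 2, …`. They are also strictly decreasing under `x ↦ x + 1`: with `t = 1 / x`, the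
decrements are the elementary functions of `log_one_add_lt` and `lt_log_one_add`, which vanish at
`t = 0` and have derivatives `t² / (2(1 + t)²)` and `t⁴ / (6(1 + t)³)`. A sequence strictly
decreasing to `0` is positive (`pos_of_step`), which gives the two inequalities.
-/

open Real

/-- The digamma function `ψ = Γ′/Γ`. -/
noncomputable def digamma (x : ℝ) : ℝ := deriv Real.Gamma x / Real.Gamma x

open Filter Topology

lemma log_one_add_lt {t : ℝ} (ht : 0 < t) : Real.log (1 + t) < (t + t / (1 + t)) / 2 := by
  let F : ℝ → ℝ := fun t => (t + t / (1 + t)) / 2 - Real.log (1 + t)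
  have hd : ∀ s : ℝ, 0 ≤ s → HasDerivAt F (s ^ 2 / (2 * (1 + s) ^ 2)) s := by
    intro s hs
    have h1 : (1 + s) ≠ 0 := by positivity
    have ha : HasDerivAt (fun t : ℝ => 1 + t) 1 s := (hasDerivAt_id s).const_add 1
    have hi := hasDerivAt_id' s
    refine HasDerivAt.congr_deriv (f := F)
      (((hi.add (hi.div ha h1)).div_const 2).sub (ha.log h1)) ?_
    field_simp
    ring
  have hm : StrictMonoOn F (Set.Ici 0) := by
    apply strictMonoOn_of_deriv_pos (convex_Ici 0)
    · exact fun s hs => (hd s hs).continuousAt.continuousWithinAt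
    · intro s hs
      rw [interior_Ici] at hs
      have hs : 0 < s := hs
      rw [(hd s hs.le).deriv]
      positivity
  have h := hm Set.self_mem_Ici ht.le ht
  simp only [F] at h
  norm_num at h
  linarith

lemma lt_log_one_add {t : ℝ} (ht : 0 < t) :
    (t + t / (1 + t)) / 2 - (t ^ 2 - (t / (1 + t)) ^ 2) / 12 < Real.log (1 + t) := by
  let F : ℝ → ℝ := fun t =>
    Real.log (1 + t) - (t + t / (1 + t)) / 2 + (t ^ 2 - (t / (1 + t)) ^ 2) / 12
  have hd : ∀ s : ℝ, 0 ≤ s → HasDerivAt F (s ^ 4 / (6 * (1 + s) ^ 3)) s := by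
    intro s hs
    have h1 : (1 + s) ≠ 0 := by positivity
    have ha : HasDerivAt (fun t : ℝ => 1 + t) 1 s := (hasDerivAt_id s).const_add 1
    have hi := hasDerivAt_id' s
    have hq := hi.div ha h1
    refine HasDerivAt.congr_deriv (f := F) (((ha.log h1).sub ((hi.add hq).div_const 2)).add
      (((hi.pow 2).sub (hq.pow 2)).div_const 12)) ?_
    simp only [Pi.div_apply]
    push_cast
    field_simp
    ring
  have hm : StrictMonoOn F (Set.Ici 0) := by
    apply strictMonoOn_of_deriv_pos (convex_Ici 0)
    · exact fun s hs => (hd s hs).continuousAt.continuousWithinAt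
    · intro s hs
      rw [interior_Ici] at hs
      have hs : 0 < s := hs
      rw [(hd s hs.le).deriv]
      positivity
  have h := hm Set.self_mem_Ici ht.le ht
  simp only [F] at h
  norm_num at h
  linarith

lemma hasDerivAt_log_Gamma {x : ℝ} (hx : 0 < x) :
    HasDerivAt (Real.log ∘ Real.Gamma) (digamma x) x := by
  have hG : DifferentiableAt ℝ Real.Gamma x :=
    Real.differentiableAt_Gamma fun m => by
      have : (0 : ℝ) ≤ m := m.cast_nonneg
      linarith
  exact hG.hasDerivAt.log (Real.Gamma_pos_of_pos hx).ne'

lemma log_Gamma_add_one {x : ℝ} (hx : 0 < x) :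
    (Real.log ∘ Real.Gamma) (x + 1) = Real.log x + (Real.log ∘ Real.Gamma) x := by
  simp only [Function.comp]
  rw [Real.Gamma_add_one hx.ne', Real.log_mul hx.ne' (Real.Gamma_pos_of_pos hx).ne']

lemma digamma_add_one {x : ℝ} (hx : 0 < x) : digamma (x + 1) = digamma x + 1 / x := by
  have h1 : HasDerivAt (fun y => (Real.log ∘ Real.Gamma) (y + 1)) (digamma (x + 1)) x :=
    (hasDerivAt_log_Gamma (by linarith : 0 < x + 1)).comp_add_const x 1
  have h2 := (Real.hasDerivAt_log hx.ne').add (hasDerivAt_log_Gamma hx)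
  have h3 : (fun y => (Real.log ∘ Real.Gamma) (y + 1)) =ᶠ[𝓝 x]
      Real.log + (Real.log ∘ Real.Gamma) := by
    filter_upwards [lt_mem_nhds hx] with y hy
    exact log_Gamma_add_one hy
  rw [h1.unique (h2.congr_of_eventuallyEq h3)]
  ring

/-- Both bounds compare the slope `log x` of `log ∘ Γ` over `[x, x + 1]` with the derivatives at
the endpoints. -/
lemma digamma_sub_log_mem {x : ℝ} (hx : 0 < x) :
    0 ≤ digamma (x + 1) - Real.log x ∧ digamma (x + 1) - Real.log x ≤ 1 / x := by
  have hx1 : 0 < x + 1 := by linarith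
  have hs : slope (Real.log ∘ Real.Gamma) x (x + 1) = Real.log x := by
    rw [slope_def_field, log_Gamma_add_one hx]
    simp
  have h1 := Real.convexOn_log_Gamma.le_slope_of_hasDerivAt (Set.mem_Ioi.2 hx)
    (Set.mem_Ioi.2 hx1) (by linarith) (hasDerivAt_log_Gamma hx)
  have h2 := Real.convexOn_log_Gamma.slope_le_of_hasDerivAt (Set.mem_Ioi.2 hx)
    (Set.mem_Ioi.2 hx1) (by linarith) (hasDerivAt_log_Gamma hx1)
  rw [hs] at h1 h2
  have := digamma_add_one hx
  constructor <;> linarith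

lemma tendsto_one_div_add_nat (x : ℝ) :
    Tendsto (fun n : ℕ => 1 / (x + n)) atTop (𝓝 0) := by
  simp only [one_div]
  exact tendsto_inv_atTop_zero.comp
    (tendsto_atTop_add_const_left _ _ tendsto_natCast_atTop_atTop)

lemma tendsto_digamma_sub_log {x : ℝ} (hx : 0 < x) :
    Tendsto (fun n : ℕ => digamma (x + n + 1) - Real.log (x + n)) atTop (𝓝 0) :=
  squeeze_zero (fun n => (digamma_sub_log_mem (by positivity)).1)
    (fun n => (digamma_sub_log_mem (by positivity)).2) (tendsto_one_div_add_nat x)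

lemma pos_of_step {f : ℝ → ℝ} {x : ℝ} (hx : 0 < x) (hf : ∀ y, 0 < y → f (y + 1) < f y)
    (hl : Tendsto (fun n : ℕ => f (x + n)) atTop (𝓝 0)) : 0 < f x := by
  have ha : StrictAnti fun n : ℕ => f (x + n) := by
    refine strictAnti_nat_of_succ_lt fun n => ?_
    have := hf (x + n) (by positivity)
    push_cast
    rwa [← add_assoc]
  have h1 := ha.antitone.le_of_tendsto hl 1
  have h0 := ha zero_lt_one
  simp only [Nat.cast_zero, add_zero] at h0
  exact lt_of_le_of_lt h1 h0

/-- The substitution `t = 1 / y` in the elementary bounds for `log (1 + t)`. -/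
lemma log_step {y : ℝ} (hy : 0 < y) :
    Real.log (y + 1) - Real.log y < (1 / y + 1 / (y + 1)) / 2 ∧
    (1 / y + 1 / (y + 1)) / 2 - ((1 / y) ^ 2 - (1 / (y + 1)) ^ 2) / 12
      < Real.log (y + 1) - Real.log y := by
  have ht : 0 < 1 / y := by positivity
  have hy1 : y + 1 ≠ 0 := by positivity
  have h1 : 1 + 1 / y = (y + 1) / y := by field_simp
  have h2 : 1 / y / (1 + 1 / y) = 1 / (y + 1) := by
    rw [h1]
    field_simp
  have ha := log_one_add_lt ht
  have hb := lt_log_one_add ht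
  rw [h2, h1, Real.log_div hy1 hy.ne'] at ha hb
  exact ⟨ha, hb⟩

theorem stmt_4 (x : ℝ) (hx : 0 < x) :
    1 / (2 * x) - 1 / (12 * x ^ 2) < digamma (x + 1) - Real.log x ∧
      digamma (x + 1) - Real.log x < 1 / (2 * x) := by
  have e1 : 1 / (2 * x) = 1 / x / 2 := by field_simp
  have e2 : 1 / (12 * x ^ 2) = (1 / x) ^ 2 / 12 := by field_simp
  have hg := tendsto_digamma_sub_log hx
  have ht := tendsto_one_div_add_nat x
  have hl := pos_of_step (x := x)
    (f := fun y => digamma (y + 1) - Real.log y - 1 / y / 2 + (1 / y) ^ 2 / 12) hx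
    (fun y hy => by
      have h1 := digamma_add_one (by linarith : 0 < y + 1)
      have h2 := (log_step hy).2
      linarith)
    (by simpa using (hg.sub (ht.div_const 2)).add ((ht.pow 2).div_const 12))
  have hu := pos_of_step (x := x)
    (f := fun y => 1 / y / 2 - (digamma (y + 1) - Real.log y)) hx
    (fun y hy => by
      have h1 := digamma_add_one (by linarith : 0 < y + 1)
      have h2 := (log_step hy).1
      linarith)
    (by simpa using (ht.div_const 2).sub hg)
  rw [e1, e2]
  constructor <;> linarith
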